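/- For every coloring of T with 3 colors there exist x, y ∈ T such that x, x + y, and x·y all receive the same color. -/

import Mathlib

/-- `InT p` means `p` is a nonzero good polynomial in one variable, i.e. an element
of the semiring `T`: nonzero, with nonnegative integer coefficients (automatic over `ℕ`)
and zero constant term. -/
def InT (p : Polynomial ℕ) : Prop := p ≠ 0 ∧ p.coeff 0 = 0

open scoped Pointwise

/-- The finitary form of `Combinatorics.exists_mono_homothetic_copy`: the scaling factor is bounded
and the homothetic copy lies in a finite set, both independent of the coloring. -/
theorem exists_finset_mono_homothetic_copy {M : Type*} [AddCommMonoid M] (S : Finset M)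
    (κ : Type*) [Finite κ] :
    ∃ (N : ℕ) (W : Finset M), ∀ C : M → κ, ∃ a ∈ Finset.Icc 1 N, ∃ (b : M) (c : κ),
      ∀ s ∈ S, a • s + b ∈ W ∧ C (a • s + b) = c := by
  classical
  obtain ⟨ι, _, hι⟩ := Combinatorics.Line.exists_mono_in_high_dimension S κ
  refine ⟨Fintype.card ι, Finset.univ.image fun v : ι → S => ∑ i, (v i : M), fun C => ?_⟩
  obtain ⟨l, c, hl⟩ := hι fun v => C (∑ i, (v i : M))
  set s : Finset ι := {i | l.idxFun i = none} with hs
  have sum_line (x : S) :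
      ∑ i, (l x i : M) = s.card • (x : M) +
        ∑ i ∈ sᶜ, ((l.idxFun i).map Subtype.val).getD 0 := by
    rw [← Finset.sum_add_sum_compl s]
    congr 1
    · rw [← Finset.sum_const]
      refine Finset.sum_congr rfl fun i hi => ?_
      rw [hs, Finset.mem_filter] at hi
      rw [l.apply_none _ _ hi.right]
    · refine Finset.sum_congr rfl fun i hi => ?_
      rw [hs, Finset.compl_filter, Finset.mem_filter] at hi
      obtain ⟨y, hy⟩ := Option.ne_none_iff_exists.mp hi.right
      simp [← hy, Option.map_some, Option.getD]
  refine ⟨s.card, Finset.mem_Icc.mpr ⟨Finset.card_pos.mpr ⟨l.proper.choose, ?_⟩,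
    Finset.card_le_univ s⟩,
    ∑ i ∈ sᶜ, ((l.idxFun i).map Subtype.val).getD 0, c, fun x hx => ?_⟩
  · rw [hs, Finset.mem_filter]
    exact ⟨Finset.mem_univ _, l.proper.choose_spec⟩
  · rw [← sum_line ⟨x, hx⟩]
    exact ⟨Finset.mem_image_of_mem _ (Finset.mem_univ (l ⟨x, hx⟩)), hl ⟨x, hx⟩⟩

/-- A subset `A` of an additive commutative monoid is piecewise syndetic if finitely many of its
translates `A - g` cover a thick set. -/
def PiecewiseSyndetic {M : Type*} [AddCommMonoid M] (A : Set M) : Prop :=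
  ∃ G : Finset M, ∀ F : Finset M, ∃ x, ∀ f ∈ F, ∃ g ∈ G, x + f + g ∈ A

namespace PiecewiseSyndetic

variable {M : Type*} [AddCommMonoid M] {A B : Set M}

theorem nonempty (hA : PiecewiseSyndetic A) : A.Nonempty := by
  obtain ⟨G, hG⟩ := hA
  obtain ⟨x, hx⟩ := hG {0}
  obtain ⟨g, -, hg⟩ := hx 0 (Finset.mem_singleton_self 0)
  exact ⟨_, hg⟩

theorem of_union (h : PiecewiseSyndetic (A ∪ B)) :
    PiecewiseSyndetic A ∨ PiecewiseSyndetic B := by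
  classical
  obtain ⟨G, hG⟩ := h
  by_cases hB : PiecewiseSyndetic B
  · exact Or.inr hB
  simp only [PiecewiseSyndetic, not_exists, not_forall] at hB
  obtain ⟨F, hF⟩ := hB G
  refine Or.inl ⟨F + G, fun H => ?_⟩
  obtain ⟨x, hx⟩ := hG (H + F)
  refine ⟨x, fun h hh => ?_⟩
  obtain ⟨f, hf, hfB⟩ := hF (x + h)
  obtain ⟨g, hg, hgAB⟩ := hx (h + f) (Finset.add_mem_add hh hf)
  refine ⟨f + g, Finset.add_mem_add hf hg, ?_⟩
  rcases hgAB with hgA | hgB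
  · simpa only [add_assoc] using hgA
  · exact absurd ⟨hg, by simpa only [add_assoc] using hgB⟩ (hfB g)

theorem of_biUnion {ι : Type*} (s : Finset ι) (A : ι → Set M)
    (h : PiecewiseSyndetic (⋃ i ∈ s, A i)) : ∃ i ∈ s, PiecewiseSyndetic (A i) := by
  classical
  induction s using Finset.induction_on with
  | empty => simpa using h.nonempty
  | insert i s _ ih =>
    rw [Finset.set_biUnion_insert] at h
    rcases h.of_union with h | h
    · exact ⟨i, Finset.mem_insert_self i s, h⟩
    · obtain ⟨j, hj, hjA⟩ := ih h
      exact ⟨j, Finset.mem_insert_of_mem hj, hjA⟩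

theorem exists_fiber {κ : Type*} [Finite κ] (hA : PiecewiseSyndetic A) (C : M → κ) :
    ∃ c, PiecewiseSyndetic {z ∈ A | C z = c} := by
  have := Fintype.ofFinite κ
  obtain ⟨c, -, hc⟩ := of_biUnion Finset.univ (fun c => {z ∈ A | C z = c}) (by
    convert! hA using 1
    ext z
    simp)
  exact ⟨c, hc⟩

/-- Multiple recurrence for piecewise syndetic sets. -/
theorem exists_recurrence (hA : PiecewiseSyndetic A) (S : Finset M) :
    ∃ a > 0, PiecewiseSyndetic {z ∈ A | ∀ s ∈ S, z + a • s ∈ A} := by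
  classical
  obtain ⟨G, hG⟩ := hA
  obtain ⟨N, W, hW⟩ := exists_finset_mono_homothetic_copy (insert 0 S) G
  obtain ⟨a, ha, h⟩ := of_biUnion (Finset.Icc 1 N)
    (fun a => {z ∈ A | ∀ s ∈ S, z + a • s ∈ A}) (by
      refine ⟨W + G, fun F => ?_⟩
      obtain ⟨x, hx⟩ := hG (F + W)
      refine ⟨x, fun f hf => ?_⟩
      have color (w : M) : ∃ g : G, w ∈ W → x + (f + w) + g ∈ A := by
        by_cases hw : w ∈ W
        · obtain ⟨g, hg, hgA⟩ := hx (f + w) (Finset.add_mem_add hf hw)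
          exact ⟨⟨g, hg⟩, fun _ => hgA⟩
        · obtain ⟨y, hy⟩ := hG {0}
          obtain ⟨g, hg, -⟩ := hy 0 (Finset.mem_singleton_self 0)
          exact ⟨⟨g, hg⟩, fun h => absurd h hw⟩
      choose C hC using color
      obtain ⟨a, ha, b, g, hab⟩ := hW C
      have mem (s : M) (hs : s ∈ insert 0 S) : x + f + (b + g) + a • s ∈ A := by
        obtain ⟨hsW, hsC⟩ := hab s hs
        have := hC _ hsW
        rw [hsC] at this
        convert! this using 1
        abel
      have hb : b ∈ W := by simpa using (hab 0 (Finset.mem_insert_self 0 S)).1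
      refine ⟨b + g, Finset.add_mem_add hb g.2, Set.mem_biUnion ha ⟨?_, fun s hs => ?_⟩⟩
      · simpa using mem 0 (Finset.mem_insert_self 0 S)
      · exact mem s (Finset.mem_insert_of_mem hs))
  exact ⟨a, (Finset.mem_Icc.mp ha).1, h⟩

end PiecewiseSyndetic

open Polynomial

theorem InT.mul_left {p q : ℕ[X]} (hp : p ≠ 0) (hq : InT q) : InT (p * q) :=
  ⟨mul_ne_zero hp hq.1, by rw [mul_coeff_zero, hq.2, mul_zero]⟩

theorem inT_X : InT (X : ℕ[X]) := ⟨X_ne_zero, coeff_X_zero⟩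

/-- The color-focusing induction: either the desired pattern occurs, or there are `n` distinct
colors `c`, each with a factorization `m * p = P` of one polynomial `P`, such that `m X z` and
`m X z + p` have color `c` for all `z` in a piecewise syndetic set. -/
theorem exists_pattern_or_focused_colors {κ : Type*} [Finite κ] (χ : ℕ[X] → κ) (n : ℕ) :
    (∃ x y : ℕ[X], InT x ∧ InT y ∧ χ (x + y) = χ x ∧ χ (x * y) = χ x) ∨
    ∃ (K : Finset κ) (P : ℕ[X]) (m p : κ → ℕ[X]) (A : Set ℕ[X]),
      K.card = n ∧ P ≠ 0 ∧ PiecewiseSyndetic A ∧ (∀ z ∈ A, z ≠ 0) ∧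
      ∀ c ∈ K, m c * p c = P ∧ InT (p c) ∧
        ∀ z ∈ A, χ (m c * (X * z)) = c ∧ χ (m c * (X * z) + p c) = c := by
  classical
  induction n with
  | zero =>
    refine Or.inr ⟨∅, 1, 1, 1, {z | z ≠ 0}, rfl, one_ne_zero, ⟨{1}, fun F => ⟨0, fun f _ =>
      ⟨1, Finset.mem_singleton_self 1, fun h => ?_⟩⟩⟩, fun z hz => hz, by simp⟩
    simpa using congrArg (fun q : ℕ[X] => q.coeff 0) h
  | succ n ih =>
    obtain h | ⟨K, P, m, p, A, hK, hP, hA, hA0, hKA⟩ := ih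
    · exact Or.inl h
    obtain ⟨c₀, hc₀⟩ := hA.exists_fiber fun z => χ (P * (X * z))
    by_cases hmem : c₀ ∈ K
    · obtain ⟨z, hzA, hz⟩ := hc₀.nonempty
      obtain ⟨hmp, hp, hχ⟩ := hKA c₀ hmem
      have hm : m c₀ ≠ 0 := left_ne_zero_of_mul (hmp.trans_ne hP)
      refine Or.inl ⟨m c₀ * (X * z), p c₀, InT.mul_left hm ?_, hp, ?_, ?_⟩
      · rw [mul_comm]
        exact InT.mul_left (hA0 z hzA) inT_X
      · rw [(hχ z hzA).1, (hχ z hzA).2]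
      · rw [(hχ z hzA).1, mul_right_comm, hmp, hz]
    let m' := Function.update m c₀ P
    let q := Function.update p c₀ 1
    have hm'q (c) (hc : c ∈ insert c₀ K) : m' c * q c = P := by
      rcases Finset.mem_insert.mp hc with rfl | hc
      · simp [m', q]
      · have : c ≠ c₀ := fun h => hmem (h ▸ hc)
        simpa [m', q, this] using (hKA c hc).1
    have hχ (c) (hc : c ∈ insert c₀ K) (z) (hz : z ∈ {z ∈ A | χ (P * (X * z)) = c₀}) :
        χ (m' c * (X * z)) = c := by
      rcases Finset.mem_insert.mp hc with rfl | hc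
      · simpa [m'] using hz.2
      · have : c ≠ c₀ := fun h => hmem (h ▸ hc)
        simpa [m', this] using ((hKA c hc).2.2 z hz.1).1
    obtain ⟨a, ha, hrec⟩ := hc₀.exists_recurrence ((insert c₀ K).image fun c => q c ^ 2)
    have hy : InT (a • P * X) := InT.mul_left (smul_ne_zero ha.ne' hP) inT_X
    refine Or.inr ⟨insert c₀ K, P * (a • P * X), m', fun c => q c * (a • P * X), _, ?_,
      mul_ne_zero hP hy.1, hrec, fun z hz => hA0 z hz.1.1, fun c hc => ⟨?_, ?_, fun z hz =>
        ⟨hχ c hc z hz.1, ?_⟩⟩⟩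
    · rw [Finset.card_insert_of_notMem hmem, hK]
    · rw [← mul_assoc, hm'q c hc]
    · exact InT.mul_left (right_ne_zero_of_mul ((hm'q c hc).trans_ne hP)) hy
    · have := hχ c hc _ (hz.2 _ (Finset.mem_image_of_mem _ hc))
      convert! this using 2
      rw [← hm'q c hc]
      simp only [nsmul_eq_mul]
      ring

theorem stmt5 (χ : Polynomial ℕ → Fin 3) :
    ∃ x y : Polynomial ℕ, InT x ∧ InT y ∧ χ (x + y) = χ x ∧ χ (x * y) = χ x := by
  refine (exists_pattern_or_focused_colors χ 4).resolve_right ?_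
  rintro ⟨K, -, -, -, -, hK, -⟩
  have := K.card_le_univ
  rw [hK, Fintype.card_fin] at this
  omega
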